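/- arXiv:1909.02929 — 2 statements merged into one kernel-verified Lean document; each statement's English description precedes it below -/
import Mathlib

section
/- For every z > 0 and c ≥ 0, the digamma function satisfies 0 ≤ ψ(z+c) − ψ(z) ≤ (c+1)/z. -/
noncomputable def digamma (x : ℝ) : ℝ := deriv (fun t => Real.log (Real.Gamma t)) x

/-!
The secant of the convex function `log ∘ Γ` over `[x, x + 1]` has slope `log x`, so `ψ x ≤ log x`
and `log x ≤ ψ (x + 1) = ψ x + x⁻¹`. Hence
`ψ (z + c) - ψ z ≤ log (z + c) - log z + z⁻¹ ≤ c / z + z⁻¹`.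
-/

open Filter Set
open scoped Topology

theorem ne_neg_natCast_of_pos {R : Type*} [Ring R] [PartialOrder R] [IsOrderedRing R] {x : R}
    (hx : 0 < x) (m : ℕ) : x ≠ -m :=
  ((neg_nonpos.2 m.cast_nonneg).trans_lt hx).ne'

theorem log_Gamma_add_one {x : ℝ} (hx : x ≠ 0) (hΓ : Real.Gamma x ≠ 0) :
    Real.log (Real.Gamma (x + 1)) = Real.log (Real.Gamma x) + Real.log x := by
  rw [Real.Gamma_add_one hx, Real.log_mul hx hΓ, add_comm]

theorem differentiableAt_log_Gamma {x : ℝ} (hx : ∀ m : ℕ, x ≠ -m) :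
    DifferentiableAt ℝ (fun t => Real.log (Real.Gamma t)) x :=
  (Real.differentiableAt_Gamma hx).log (Real.Gamma_ne_zero hx)

theorem digamma_add_one {x : ℝ} (hx : ∀ m : ℕ, x ≠ -m) : digamma (x + 1) = digamma x + x⁻¹ := by
  have hx0 : x ≠ 0 := by simpa using hx 0
  have hΓ : ∀ᶠ t in 𝓝 x, Real.Gamma t ≠ 0 :=
    (Real.differentiableAt_Gamma hx).continuousAt.eventually_ne (Real.Gamma_ne_zero hx)
  have hlog : (fun t => Real.log (Real.Gamma (t + 1))) =ᶠ[𝓝 x]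
      fun t => Real.log (Real.Gamma t) + Real.log t := by
    filter_upwards [eventually_ne_nhds hx0, hΓ] with t ht hΓt using log_Gamma_add_one ht hΓt
  calc digamma (x + 1)
      = deriv (fun t => Real.log (Real.Gamma (t + 1))) x :=
        (deriv_comp_add_const (f := fun t => Real.log (Real.Gamma t)) 1 x).symm
    _ = deriv (fun t => Real.log (Real.Gamma t) + Real.log t) x := hlog.deriv_eq
    _ = digamma x + x⁻¹ := by
        rw [deriv_fun_add (differentiableAt_log_Gamma hx) (Real.differentiableAt_log hx0),
          Real.deriv_log, digamma]

theorem monotoneOn_digamma : MonotoneOn digamma (Ioi 0) :=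
  Real.convexOn_log_Gamma.monotoneOn_deriv fun _ hx =>
    differentiableAt_log_Gamma (ne_neg_natCast_of_pos hx)

theorem slope_log_Gamma_add_one {x : ℝ} (hx : x ≠ 0) (hΓ : Real.Gamma x ≠ 0) :
    slope (Real.log ∘ Real.Gamma) x (x + 1) = Real.log x := by
  simp only [slope_def_field, Function.comp_apply, log_Gamma_add_one hx hΓ, add_sub_cancel_left,
    div_one]

theorem digamma_le_log {x : ℝ} (hx : 0 < x) : digamma x ≤ Real.log x := by
  rw [← slope_log_Gamma_add_one hx.ne' (Real.Gamma_pos_of_pos hx).ne']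
  exact Real.convexOn_log_Gamma.deriv_le_slope hx (add_pos hx one_pos) (lt_add_one x)
    (differentiableAt_log_Gamma (ne_neg_natCast_of_pos hx))

theorem log_le_digamma_add_one {x : ℝ} (hx : 0 < x) : Real.log x ≤ digamma (x + 1) := by
  have hx1 : 0 < x + 1 := add_pos hx one_pos
  rw [← slope_log_Gamma_add_one hx.ne' (Real.Gamma_pos_of_pos hx).ne']
  exact Real.convexOn_log_Gamma.slope_le_deriv hx hx1 (lt_add_one x)
    (differentiableAt_log_Gamma (ne_neg_natCast_of_pos hx1))

theorem log_sub_log_le_sub_div {x y : ℝ} (hx : 0 < x) (hy : 0 < y) :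
    Real.log y - Real.log x ≤ (y - x) / x := by
  rw [← Real.log_div hy.ne' hx.ne', sub_div, div_self hx.ne']
  exact Real.log_le_sub_one_of_pos (div_pos hy hx)

theorem digamma_sub_digamma_le {x y : ℝ} (hx : 0 < x) (hy : 0 < y) :
    digamma y - digamma x ≤ (y - x + 1) / x := by
  have hlower : Real.log x ≤ digamma x + x⁻¹ :=
    (log_le_digamma_add_one hx).trans_eq (digamma_add_one (ne_neg_natCast_of_pos hx))
  calc digamma y - digamma x
      ≤ Real.log y - (Real.log x - x⁻¹) :=
        sub_le_sub (digamma_le_log hy) (sub_le_iff_le_add.2 hlower)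
    _ = Real.log y - Real.log x + x⁻¹ := by ring
    _ ≤ (y - x) / x + x⁻¹ := by gcongr; exact log_sub_log_le_sub_div hx hy
    _ = (y - x + 1) / x := by ring

theorem digamma_diff_bounds (z c : ℝ) (hz : 0 < z) (hc : 0 ≤ c) :
    0 ≤ digamma (z + c) - digamma z ∧ digamma (z + c) - digamma z ≤ (c + 1) / z := by
  have hzc : 0 < z + c := add_pos_of_pos_of_nonneg hz hc
  constructor
  · exact sub_nonneg.2 (monotoneOn_digamma hz hzc (le_add_of_nonneg_right hc))
  · simpa only [add_sub_cancel_left] using digamma_sub_digamma_le hz hzc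
end

section
/- For every λ > 0, r > 0, α > 1 and y ∈ ℕ, with γ = (α−1)/r, the derivative of the log beta negative binomial pmf with respect to log λ equals the score: λ · (d/dλ) log p(y; λ, r, α) = γλ·(ψ(γλ+y) + ψ(γλ+α) − ψ(γλ+y+α+r) − ψ(γλ)). -/
/-!
In terms of `b = (a - 1) / r * lam`, the only factor of the mass function that depends on `lam` is
the ratio `B(a + r, b + y) / B(a, b)`. Since `∂B(a, b)/∂b = B(a, b) (ψ(b) - ψ(a + b))`, the
logarithmic derivative of this ratio in `b` is `ψ(b + y) + ψ(a + b) - ψ(a + r + b + y) - ψ(b)`,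
and the chain rule contributes the factor `(a - 1) / r`.
-/

noncomputable def betaFn (a b : ℝ) : ℝ := Real.Gamma a * Real.Gamma b / Real.Gamma (a + b)

noncomputable def bnbPmf (lam r a : ℝ) (y : ℕ) : ℝ :=
  Real.Gamma ((y : ℝ) + r) / (Real.Gamma ((y : ℝ) + 1) * Real.Gamma r) *
    (betaFn (a + r) ((a - 1) * lam / r + (y : ℝ)) / betaFn a ((a - 1) * lam / r))

theorem hasDerivAt_Gamma {x : ℝ} (hx : 0 < x) :
    HasDerivAt Real.Gamma (Real.Gamma x * digamma x) x := by
  have hdiff : DifferentiableAt ℝ Real.Gamma x :=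
    Real.differentiableOn_Gamma_Ioi.differentiableAt (Ioi_mem_nhds hx)
  have hne : Real.Gamma x ≠ 0 := (Real.Gamma_pos_of_pos hx).ne'
  rw [digamma, deriv.log hdiff hne, mul_div_cancel₀ _ hne]
  exact hdiff.hasDerivAt

theorem betaFn_pos {a b : ℝ} (ha : 0 < a) (hb : 0 < b) : 0 < betaFn a b :=
  ProbabilityTheory.beta_pos ha hb

theorem hasDerivAt_betaFn_right {a b : ℝ} (hb : 0 < b) (hab : 0 < a + b) :
    HasDerivAt (betaFn a) (betaFn a b * (digamma b - digamma (a + b))) b := by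
  have hne : Real.Gamma (a + b) ≠ 0 := (Real.Gamma_pos_of_pos hab).ne'
  have hquot := ((hasDerivAt_Gamma hb).const_mul (Real.Gamma a)).fun_div
    ((hasDerivAt_Gamma hab).comp_const_add a b) hne
  refine hquot.congr_deriv ?_
  rw [betaFn]
  field_simp

theorem hasDerivAt_betaFn_add_div_betaFn {a b c s : ℝ} (ha : 0 < a) (hb : 0 < b)
    (hbs : 0 < b + s) (hcbs : 0 < c + (b + s)) :
    HasDerivAt (fun t => betaFn c (t + s) / betaFn a t)
      (betaFn c (b + s) / betaFn a b *
        (digamma (b + s) + digamma (a + b) - digamma (c + (b + s)) - digamma b)) b := by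
  have hne : betaFn a b ≠ 0 := (betaFn_pos ha hb).ne'
  have hquot := ((hasDerivAt_betaFn_right hbs hcbs).comp_add_const b s).fun_div
    (hasDerivAt_betaFn_right hb (add_pos ha hb)) hne
  refine hquot.congr_deriv ?_
  field_simp
  ring

theorem bnbPmf_pos {lam r a : ℝ} (hr : 0 < r) (ha : 0 < a) (hlam : 0 < (a - 1) / r * lam)
    (y : ℕ) : 0 < bnbPmf lam r a y := by
  rw [bnbPmf, mul_div_right_comm]
  have hBnum : 0 < betaFn (a + r) ((a - 1) / r * lam + y) :=
    betaFn_pos (by positivity) (by positivity)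
  have hBden : 0 < betaFn a ((a - 1) / r * lam) := betaFn_pos ha hlam
  positivity

theorem hasDerivAt_bnbPmf {lam r a : ℝ} (ha : 0 < a) (har : 0 < a + r)
    (hlam : 0 < (a - 1) / r * lam) (y : ℕ) :
    HasDerivAt (fun l => bnbPmf l r a y)
      (bnbPmf lam r a y * ((a - 1) / r *
        (digamma ((a - 1) / r * lam + y) + digamma ((a - 1) / r * lam + a) -
          digamma ((a - 1) / r * lam + y + a + r) - digamma ((a - 1) / r * lam)))) lam := by
  have hratio := hasDerivAt_betaFn_add_div_betaFn (c := a + r) (s := y) ha hlam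
    (by positivity) (by positivity)
  have hlin : HasDerivAt (fun l => (a - 1) / r * l) ((a - 1) / r) lam :=
    hasDerivAt_const_mul _
  have hpmf := (hratio.comp lam hlin).const_mul
    (Real.Gamma (y + r) / (Real.Gamma (y + 1) * Real.Gamma r))
  simp only [bnbPmf, mul_div_right_comm (a - 1)]
  refine hpmf.congr_deriv ?_
  rw [add_comm a ((a - 1) / r * lam),
    show a + r + ((a - 1) / r * lam + y) = (a - 1) / r * lam + y + a + r by ring]
  ring

theorem bnb_log_deriv_eq_score_general {lam r a : ℝ} (hr : 0 < r) (ha : 0 < a)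
    (hlam : 0 < (a - 1) / r * lam) (y : ℕ) :
    lam * deriv (fun l => Real.log (bnbPmf l r a y)) lam =
      (a - 1) / r * lam *
        (digamma ((a - 1) / r * lam + y) + digamma ((a - 1) / r * lam + a) -
          digamma ((a - 1) / r * lam + y + a + r) - digamma ((a - 1) / r * lam)) := by
  have hne : bnbPmf lam r a y ≠ 0 := (bnbPmf_pos hr ha hlam y).ne'
  rw [((hasDerivAt_bnbPmf ha (add_pos ha hr) hlam y).log hne).deriv, mul_div_cancel_left₀ _ hne]
  ring

theorem bnb_log_deriv_eq_score (lam r a : ℝ) (hlam : 0 < lam) (hr : 0 < r) (ha : 1 < a)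
    (y : ℕ) :
    lam * deriv (fun l => Real.log (bnbPmf l r a y)) lam =
      ((a - 1) / r) * lam *
        (digamma (((a - 1) / r) * lam + (y : ℝ)) + digamma (((a - 1) / r) * lam + a) -
          digamma (((a - 1) / r) * lam + (y : ℝ) + a + r) - digamma (((a - 1) / r) * lam)) := by
  exact bnb_log_deriv_eq_score_general hr (zero_lt_one.trans ha)
    (mul_pos (div_pos (sub_pos.2 ha) hr) hlam) y
end
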